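/- Under Jacod's density hypothesis and the noisy-barrier setup, set F^M_s(l) := p_s(l) 1_{X*_s > l} and N_t(x) := ∫_ℝ F^M_t(l) q_t(x − l) P^L(dl). For all 0 ≤ t ≤ T and every bounded F_T-measurable random variable ξ, let v : Ω × ℝ → ℝ be F_t ⊗ B(ℝ)-measurable and such that for P^L-almost every l, v(·,l) is a version of E_P[ξ F^M_T(l) | F_t]. Then, P-almost surely, E_P[ξ 1_{τ > T} | G^I_t] = ( 1_{τ > t} / N_t(L_t) ) ∫_ℝ v(·,l) q_t(L_t − l) P^L(dl), where the right-hand side is taken to be 0 on {τ ≤ t} (note that P(τ > t, N_t(L_t) = 0) = 0). (The terminal-payoff term in the proof of Theorem 5.1.) -/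

import Mathlib

open MeasureTheory ProbabilityTheory Set
open scoped NNReal Classical

noncomputable section

/-- Running infimum `X*_t = inf_{s ≤ t} X_s` of the process `X` over the time interval
`[0, t]`. -/
def runInf {Ω : Type*} (X : ℝ≥0 → Ω → ℝ) (t : ℝ≥0) (ω : Ω) : ℝ :=
  ⨅ s : Set.Icc (0 : ℝ≥0) t, X s.1 ω

/-- The supermartingale `F^M_s(l) := p_s(l) 1_{X*_s > l}`. -/
def FM {Ω : Type*} (p : ℝ≥0 → ℝ → Ω → ℝ) (X : ℝ≥0 → Ω → ℝ) (s : ℝ≥0) (l : ℝ) (ω : Ω) : ℝ :=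
  p s l ω * (if l < runInf X s ω then 1 else 0)

/-- `N_t(x) := ∫ F^M_t(l) q_t(x − l) P^L(dl)`. -/
def NI {Ω : Type*} [m0 : MeasurableSpace Ω] (P : Measure Ω) (p : ℝ≥0 → ℝ → Ω → ℝ)
    (X : ℝ≥0 → Ω → ℝ) (L : Ω → ℝ) (q : ℝ≥0 → ℝ → ℝ) (t : ℝ≥0) (x : ℝ) (ω : Ω) : ℝ :=
  ∫ l, FM p X t l ω * q t (x - l) ∂(P.map L)

/-- The σ-algebra `σ({τ ≤ s} : s ≤ t)` generated by the default observations up to time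
`t`. -/
def defaultSigma {Ω : Type*} (τ : Ω → ℝ≥0) (t : ℝ≥0) : MeasurableSpace Ω :=
  MeasurableSpace.generateFrom {A | ∃ s ≤ t, A = {ω | τ ω ≤ s}}

/-- The insider's full σ-algebra
`G^I_t = F_t ∨ σ(L_s = L + ε_s : s ≤ t) ∨ σ({τ ≤ s} : s ≤ t)`. -/
def insiderFullSigma {Ω : Type*} [m0 : MeasurableSpace Ω] (F : Filtration ℝ≥0 m0)
    (L : Ω → ℝ) (ε : ℝ≥0 → Ω → ℝ) (τ : Ω → ℝ≥0) (t : ℝ≥0) : MeasurableSpace Ω :=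
  F t ⊔ (⨆ s ∈ Set.Iic t, MeasurableSpace.comap (fun ω => L ω + ε s ω) inferInstance) ⊔
    defaultSigma τ t

/-!
Write `Z` for the information carried by `F_t`. Jacod's density gives the `ξ 1_{τ > T}`-weighted
law of `(Z, L)` relative to `P^Z ⊗ P^L`; conditioning that density on the coarser `F_t` replaces
`ξ F^M_T` by `v`. The noise `ε_t` is independent of `(Z, L)`, so convolving with `q_t` gives the
weighted law of `(Z, L + ε_t)` relative to `P^Z ⊗ dx`, with density `∫ v(·, l) q_t(x - l) P^L(dl)`.
A conditional expectation given `(Z, L + ε_t)` is then a quotient of two such densities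
(Kallianpur–Striebel), and the increments `ε_s - ε_t`, which together with `L + ε_t` generate
the whole noisy observation, do not change it because they are independent of everything else.
Finally, `G^I_t` and `F^I_t` have the same trace on `{τ > t}`, so there the conditional expectation
given `G^I_t` is the quotient of those of `ξ 1_{τ > T}` and `1_{τ > t}` given `F^I_t`.
-/

section PiSystem

variable {Ω Ω' S : Type*} {mΩ : MeasurableSpace Ω} {mΩ' : MeasurableSpace Ω'}
  {P : Measure Ω} {Q : Measure Ω'} {f : Ω → ℝ} {g : Ω' → ℝ}

lemma setIntegral_preimage_eq_of_generateFrom {mS : MeasurableSpace S} {C : Set (Set S)}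
    (hgen : mS = MeasurableSpace.generateFrom C) (hC : IsPiSystem C) (huniv : univ ∈ C)
    {V : Ω → S} {W : Ω' → S} (hV : Measurable V) (hW : Measurable W)
    (hf : Integrable f P) (hg : Integrable g Q)
    (h : ∀ A ∈ C, ∫ ω in V ⁻¹' A, f ω ∂P = ∫ ω in W ⁻¹' A, g ω ∂Q)
    {A : Set S} (hA : MeasurableSet A) :
    ∫ ω in V ⁻¹' A, f ω ∂P = ∫ ω in W ⁻¹' A, g ω ∂Q := by
  have htotal : ∫ ω, f ω ∂P = ∫ ω, g ω ∂Q := by simpa using h univ huniv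
  induction A, hA using MeasurableSpace.induction_on_inter hgen hC with
  | empty => simp
  | basic A hA => exact h A hA
  | compl A hA ih =>
    simp only [preimage_compl]
    rw [setIntegral_compl (hV hA) hf, setIntegral_compl (hW hA) hg, ih, htotal]
  | iUnion A hdisj hA ih =>
    simp only [preimage_iUnion]
    rw [integral_iUnion (fun i => hV (hA i)) (fun i j hij => (hdisj hij).preimage V)
        hf.integrableOn,
      integral_iUnion (fun i => hW (hA i)) (fun i j hij => (hdisj hij).preimage W) hg.integrableOn]
    exact tsum_congr ih

lemma setIntegral_preimage_eq_of_prod {E G : Type*} [MeasurableSpace E] [MeasurableSpace G]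
    {V : Ω → E × G} {W : Ω' → E × G} (hV : Measurable V) (hW : Measurable W)
    (hf : Integrable f P) (hg : Integrable g Q)
    (h : ∀ A B, MeasurableSet A → MeasurableSet B →
      ∫ ω in V ⁻¹' A ×ˢ B, f ω ∂P = ∫ ω in W ⁻¹' A ×ˢ B, g ω ∂Q)
    {A : Set (E × G)} (hA : MeasurableSet A) :
    ∫ ω in V ⁻¹' A, f ω ∂P = ∫ ω in W ⁻¹' A, g ω ∂Q := by
  refine setIntegral_preimage_eq_of_generateFrom generateFrom_prod.symm isPiSystem_prod
    ⟨univ, .univ, univ, .univ, univ_prod_univ⟩ hV hW hf hg ?_ hA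
  rintro _ ⟨A, hA, B, hB, rfl⟩
  exact h A B hA hB

lemma setIntegral_eq_of_forall_inter {m₁ m₂ : MeasurableSpace Ω} (h₁ : m₁ ≤ mΩ) (h₂ : m₂ ≤ mΩ)
    {g : Ω → ℝ} (hf : Integrable f P) (hg : Integrable g P)
    (h : ∀ a b, MeasurableSet[m₁] a → MeasurableSet[m₂] b →
      ∫ ω in a ∩ b, f ω ∂P = ∫ ω in a ∩ b, g ω ∂P)
    {A : Set Ω} (hA : MeasurableSet[m₁ ⊔ m₂] A) :
    ∫ ω in A, f ω ∂P = ∫ ω in A, g ω ∂P := by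
  have hdiag : Measurable[mΩ, m₁.prod m₂] fun ω => (ω, ω) :=
    (measurable_id'' h₁).prodMk (measurable_id'' h₂)
  have hcomap : (m₁.prod m₂).comap (fun ω => (ω, ω)) = m₁ ⊔ m₂ :=
    (MeasurableSpace.comap_prodMk id id).trans (by simp only [MeasurableSpace.comap_id])
  rw [← hcomap] at hA
  obtain ⟨B, hB, rfl⟩ := hA
  exact @setIntegral_preimage_eq_of_prod Ω Ω mΩ mΩ P P f g Ω Ω m₁ m₂ _ _ hdiag hdiag hf hg
    (fun a b ha hb => h a b ha hb) B hB

end PiSystem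

section Independence

variable {Ω : Type*} {m₁ m₂ m₃ mΩ : MeasurableSpace Ω} {P : Measure Ω}

lemma setIntegral_eq_measureReal_mul_of_indep [IsProbabilityMeasure P] (h₁ : m₁ ≤ mΩ)
    (h₂ : m₂ ≤ mΩ) (hindep : Indep m₁ m₂ P) {f : Ω → ℝ} (hf : StronglyMeasurable[m₁] f)
    (hfi : Integrable f P) {b : Set Ω} (hb : MeasurableSet[m₂] b) :
    ∫ ω in b, f ω ∂P = P.real b * ∫ ω, f ω ∂P := by
  rw [← setIntegral_condExp h₂ hfi hb,
    integral_congr_ae (ae_restrict_of_ae (condExp_indep_eq h₁ h₂ hf hindep)),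
    setIntegral_const, smul_eq_mul]

lemma condExp_sup_of_indep [IsProbabilityMeasure P] (h₁₂ : m₁ ≤ m₂) (h₂ : m₂ ≤ mΩ)
    (h₃ : m₃ ≤ mΩ) (hindep : Indep m₂ m₃ P) {f : Ω → ℝ} (hf : StronglyMeasurable[m₂] f)
    (hfi : Integrable f P) : P[f | m₁ ⊔ m₃] =ᵐ[P] P[f | m₁] := by
  have h₁ := h₁₂.trans h₂
  refine (ae_eq_condExp_of_forall_setIntegral_eq (sup_le h₁ h₃) hfi
    (fun _ _ _ => integrable_condExp.integrableOn) (fun A hA _ => ?_)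
    (stronglyMeasurable_condExp.mono (le_sup_left (a := m₁) (b := m₃))).aestronglyMeasurable).symm
  refine setIntegral_eq_of_forall_inter h₁ h₃ integrable_condExp hfi (fun a b ha hb => ?_) hA
  have factor {g : Ω → ℝ} (hg : StronglyMeasurable[m₂] g) (hgi : Integrable g P) :
      ∫ ω in a ∩ b, g ω ∂P = P.real b * ∫ ω in a, g ω ∂P := by
    rw [inter_comm, ← setIntegral_indicator (h₁ a ha),
      setIntegral_eq_measureReal_mul_of_indep h₂ h₃ hindep
        (hg.indicator (h₁₂ a ha)) (hgi.indicator (h₁ a ha)) hb, integral_indicator (h₁ a ha)]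
  rw [factor (stronglyMeasurable_condExp.mono h₁₂) integrable_condExp, factor hf hfi,
    setIntegral_condExp h₁ hfi ha]

lemma indep_sup_right_of_indep_sup_left [IsProbabilityMeasure P] (h₁ : m₁ ≤ mΩ) (h₂ : m₂ ≤ mΩ)
    (h₃ : m₃ ≤ mΩ) (h : Indep m₁ m₂ P) (h' : Indep (m₁ ⊔ m₂) m₃ P) : Indep m₁ (m₂ ⊔ m₃) P := by
  refine (Indep_iff _ _ P).2 fun a s ha hs => ?_
  have hmul : ∫ ω in s, a.indicator (fun _ => (1 : ℝ)) ω ∂P = ∫ _ in s, P.real a ∂P := by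
    refine setIntegral_eq_of_forall_inter h₂ h₃ ((integrable_const 1).indicator (h₁ a ha))
      (integrable_const _) (fun b c hb hc => ?_) hs
    have hb' := (le_sup_right : m₂ ≤ m₁ ⊔ m₂) b hb
    have hab := ((le_sup_left : m₁ ≤ m₁ ⊔ m₂) a ha).inter hb'
    rw [setIntegral_indicator (h₁ a ha), show b ∩ c ∩ a = a ∩ b ∩ c by tauto_set]
    simp only [setIntegral_const, smul_eq_mul, mul_one, measureReal_def,
      (Indep_iff _ _ P).1 h' _ _ hab hc, (Indep_iff _ _ P).1 h' _ _ hb' hc,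
      (Indep_iff _ _ P).1 h _ _ ha hb, ENNReal.toReal_mul]
    ring
  rw [setIntegral_indicator (h₁ a ha)] at hmul
  simp only [setIntegral_const, smul_eq_mul, mul_one] at hmul
  rw [inter_comm, ← ENNReal.toReal_eq_toReal_iff' (measure_ne_top P _)
    (ENNReal.mul_ne_top (measure_ne_top P _) (measure_ne_top P _)), ENNReal.toReal_mul]
  exact hmul.trans (mul_comm _ _)

end Independence

section ProductIntegral

variable {Ω E E' G : Type*} {mΩ : MeasurableSpace Ω} {mE : MeasurableSpace E}
  {mE' : MeasurableSpace E'} {mG : MeasurableSpace G} {P : Measure Ω} [SFinite P]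
  {μ : Measure G} [SFinite μ]

lemma setIntegral_prod_map_symm {Z : Ω → E} (hZ : Measurable Z)
    {w : E × G → ℝ} (hw : Measurable w) (hwi : Integrable w ((P.map Z).prod μ)) {A : Set E}
    {B : Set G} (hA : MeasurableSet A) :
    ∫ s in A ×ˢ B, w s ∂((P.map Z).prod μ) = ∫ l in B, ∫ ω in Z ⁻¹' A, w (Z ω, l) ∂P ∂μ := by
  have hwi' : Integrable w (((P.map Z).restrict A).prod (μ.restrict B)) := by
    rw [Measure.prod_restrict]
    exact hwi.integrableOn
  rw [← Measure.prod_restrict, integral_prod_symm _ hwi']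
  refine integral_congr_ae (ae_of_all _ fun l => ?_)
  exact setIntegral_map hA (hw.comp measurable_prodMk_right).aestronglyMeasurable hZ.aemeasurable

lemma integrable_prod_map_of_condExp {Z : Ω → E} {Z' : Ω → E'} (hZ : Measurable Z)
    (hZ' : Measurable Z')
    {v : E × G → ℝ} {w : E' × G → ℝ} (hv : Measurable v) (hw : Measurable w)
    (hwi : Integrable w ((P.map Z').prod μ))
    (hvw : ∀ᵐ l ∂μ, (fun ω => v (Z ω, l)) =ᵐ[P] P[fun ω => w (Z' ω, l) | mE.comap Z]) :
    Integrable v ((P.map Z).prod μ) := by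
  refine (integrable_prod_iff' hv.aestronglyMeasurable).2 ⟨?_, ?_⟩
  · filter_upwards [hvw] with l hl
    exact (integrable_map_measure (hv.comp measurable_prodMk_right).aestronglyMeasurable
      hZ.aemeasurable).2 (integrable_condExp.congr hl.symm)
  · refine hwi.integral_norm_prod_right.mono'
      hv.norm.stronglyMeasurable.integral_prod_left'.aestronglyMeasurable ?_
    filter_upwards [hvw] with l hl
    rw [Real.norm_of_nonneg (integral_nonneg fun _ => norm_nonneg _),
      integral_map (f := fun z => ‖v (z, l)‖) hZ.aemeasurable
        (hv.comp measurable_prodMk_right).norm.aestronglyMeasurable,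
      integral_map (f := fun z => ‖w (z, l)‖) hZ'.aemeasurable
        (hw.comp measurable_prodMk_right).norm.aestronglyMeasurable]
    exact (integral_congr_ae (hl.fun_comp norm)).trans_le (integral_abs_condExp_le _)

end ProductIntegral

/-- The signed law `A ↦ ∫ f 1_{W ∈ A} dP` of `W` weighted by `f` has the integrable density `w`
with respect to `ν`. With `f = 1` this says that `w` is the (real-valued) density of the law of `W`.
The measurability and integrability conditions keep the Bochner integrals from being junk. -/
structure HasWeightedDensity {Ω S : Type*} {mΩ : MeasurableSpace Ω} {mS : MeasurableSpace S}
    (P : Measure Ω) (f : Ω → ℝ) (W : Ω → S) (ν : Measure S) (w : S → ℝ) : Prop where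
  integrable : Integrable f P
  measurable_map : Measurable W
  measurable_density : Measurable w
  integrable_density : Integrable w ν
  setIntegral_eq : ∀ A, MeasurableSet A → ∫ ω in W ⁻¹' A, f ω ∂P = ∫ s in A, w s ∂ν

namespace HasWeightedDensity

variable {Ω S E G : Type*} {mΩ : MeasurableSpace Ω} {mS : MeasurableSpace S}
  {mE : MeasurableSpace E} {P : Measure Ω} {f : Ω → ℝ} {W : Ω → S} {ν : Measure S}
  {n d w : S → ℝ}

lemma of_prod {_ : MeasurableSpace G}
    {V : Ω → E} {U : Ω → G} {ν : Measure (E × G)} {w : E × G → ℝ}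
    (hf : Integrable f P) (hV : Measurable V) (hU : Measurable U) (hw : Measurable w)
    (hwi : Integrable w ν)
    (h : ∀ A B, MeasurableSet A → MeasurableSet B →
      ∫ ω in V ⁻¹' A ∩ U ⁻¹' B, f ω ∂P = ∫ s in A ×ˢ B, w s ∂ν) :
    HasWeightedDensity P f (fun ω => (V ω, U ω)) ν w :=
  ⟨hf, hV.prodMk hU, hw, hwi, fun _ hA =>
    setIntegral_preimage_eq_of_prod (hV.prodMk hU) measurable_id hf hwi h hA⟩

lemma comp_measurableEquiv {S' : Type*} {mS' : MeasurableSpace S'} {ν' : Measure S'}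
    (h : HasWeightedDensity P f W ν w) (e : S ≃ᵐ S') (he : MeasurePreserving e ν ν') :
    HasWeightedDensity P f (e ∘ W) ν' (w ∘ e.symm) where
  integrable := h.integrable
  measurable_map := e.measurable.comp h.measurable_map
  measurable_density := h.measurable_density.comp e.symm.measurable
  integrable_density := he.symm.integrable_comp_of_integrable h.integrable_density
  setIntegral_eq A hA := by
    rw [← he.setIntegral_preimage_emb e.measurableEmbedding, preimage_comp,
      h.setIntegral_eq _ (e.measurable hA)]
    simp only [Function.comp_apply, MeasurableEquiv.symm_apply_apply]

lemma fst {V : Ω → S} {U : Ω → E} {μ : Measure E} [SFinite ν] [SFinite μ] {w : S × E → ℝ}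
    (h : HasWeightedDensity P f (fun ω => (V ω, U ω)) (ν.prod μ) w) :
    HasWeightedDensity P f V ν fun s => ∫ u, w (s, u) ∂μ where
  integrable := h.integrable
  measurable_map := measurable_fst.comp h.measurable_map
  measurable_density := h.measurable_density.stronglyMeasurable.integral_prod_right'.measurable
  integrable_density := h.integrable_density.integral_prod_left
  setIntegral_eq A hA := by
    have hpre : V ⁻¹' A = (fun ω => (V ω, U ω)) ⁻¹' A ×ˢ univ := by ext; simp
    rw [hpre, h.setIntegral_eq _ (hA.prod .univ),
      setIntegral_prod _ h.integrable_density.integrableOn]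
    simp only [Measure.restrict_univ]

lemma density_nonneg (h : HasWeightedDensity P (fun _ => 1) W ν d) : ∀ᵐ s ∂ν, 0 ≤ d s := by
  refine ae_nonneg_of_forall_setIntegral_nonneg h.integrable_density fun A hA _ => ?_
  rw [← h.setIntegral_eq A hA]
  exact integral_nonneg fun _ => zero_le_one

lemma map_eq_withDensity [IsFiniteMeasure P] (h : HasWeightedDensity P (fun _ => 1) W ν d) :
    P.map W = ν.withDensity fun s => ENNReal.ofReal (d s) := by
  ext A hA
  have hA' := h.setIntegral_eq A hA
  rw [setIntegral_const, smul_eq_mul, mul_one] at hA'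
  rw [Measure.map_apply h.measurable_map hA, withDensity_apply _ hA,
    ← ofReal_integral_eq_lintegral_ofReal h.integrable_density.integrableOn
      (ae_restrict_of_ae h.density_nonneg), ← hA', ofReal_measureReal]

lemma density_pos [IsFiniteMeasure P] (h : HasWeightedDensity P (fun _ => 1) W ν d) :
    ∀ᵐ ω ∂P, 0 < d (W ω) := by
  refine ae_of_ae_map (p := fun s => 0 < d s) h.measurable_map.aemeasurable ?_
  rw [h.map_eq_withDensity, ae_withDensity_iff h.measurable_density.ennreal_ofReal]
  exact ae_of_all _ fun s hs => ENNReal.ofReal_pos.1 (pos_iff_ne_zero.2 hs)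

lemma integrable_comp_iff [IsFiniteMeasure P] (h : HasWeightedDensity P (fun _ => 1) W ν d)
    {φ : S → ℝ} (hφ : Measurable φ) :
    Integrable (fun ω => φ (W ω)) P ↔ Integrable (fun s => d s * φ s) ν := by
  rw [← Function.comp_def, ← integrable_map_measure hφ.aestronglyMeasurable
    h.measurable_map.aemeasurable, h.map_eq_withDensity,
    integrable_withDensity_iff_integrable_smul' h.measurable_density.ennreal_ofReal (by simp)]
  refine integrable_congr ?_
  filter_upwards [h.density_nonneg] with s hs
  rw [ENNReal.toReal_ofReal hs, smul_eq_mul]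

lemma setIntegral_comp [IsFiniteMeasure P] (h : HasWeightedDensity P (fun _ => 1) W ν d)
    {φ : S → ℝ} (hφ : Measurable φ) {A : Set S} (hA : MeasurableSet A) :
    ∫ ω in W ⁻¹' A, φ (W ω) ∂P = ∫ s in A, d s * φ s ∂ν := by
  rw [← setIntegral_map hA hφ.aestronglyMeasurable h.measurable_map.aemeasurable,
    h.map_eq_withDensity, setIntegral_withDensity_eq_setIntegral_toReal_smul
      h.measurable_density.ennreal_ofReal (by simp) _ hA]
  refine integral_congr_ae (ae_restrict_of_ae ?_)
  filter_upwards [h.density_nonneg] with s hs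
  rw [ENNReal.toReal_ofReal hs, smul_eq_mul]

lemma comp_mul [IsFiniteMeasure P] (h : HasWeightedDensity P (fun _ => 1) W ν d)
    {φ : S → ℝ} (hφ : Measurable φ) (hφi : Integrable (fun ω => φ (W ω)) P) :
    HasWeightedDensity P (fun ω => φ (W ω)) W ν fun s => d s * φ s :=
  ⟨hφi, h.measurable_map, h.measurable_density.mul hφ, (h.integrable_comp_iff hφ).1 hφi,
    fun _ hA => h.setIntegral_comp hφ hA⟩

lemma condExp_comap_ae_eq_div [IsFiniteMeasure P] (hn : HasWeightedDensity P f W ν n)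
    (hd : HasWeightedDensity P (fun _ => 1) W ν d) :
    P[f | mS.comap W] =ᵐ[P] fun ω => n (W ω) / d (W ω) := by
  have hquot : Measurable fun s => n s / d s := hn.measurable_density.div hd.measurable_density
  have hpos : MeasurableSet {s | 0 < d s} := measurableSet_lt measurable_const hd.measurable_density
  have hcancel : (fun s => d s * (n s / d s)) =ᵐ[ν] {s | 0 < d s}.indicator n := by
    filter_upwards [hd.density_nonneg] with s hs
    rcases hs.eq_or_lt with h0 | h0
    · simp [← h0]
    · rw [indicator_of_mem (show s ∈ {s | 0 < d s} from h0), mul_div_cancel₀ _ h0.ne']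
  have hquoti : Integrable (fun ω => n (W ω) / d (W ω)) P :=
    (hd.integrable_comp_iff hquot).2
      ((integrable_congr hcancel).2 (hn.integrable_density.indicator hpos))
  refine (ae_eq_condExp_of_forall_setIntegral_eq hn.measurable_map.comap_le hn.integrable
    (fun _ _ _ => hquoti.integrableOn) ?_
    (hquot.comp (comap_measurable W)).stronglyMeasurable.aestronglyMeasurable).symm
  rintro _ ⟨A, hA, rfl⟩ -
  have hinter : (W ⁻¹' (A ∩ {s | 0 < d s}) : Set Ω) =ᵐ[P] W ⁻¹' A := by
    filter_upwards [hd.density_pos] with ω hω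
    exact propext (and_iff_left hω)
  rw [hd.setIntegral_comp hquot hA, integral_congr_ae (ae_restrict_of_ae hcancel),
    setIntegral_indicator hpos, ← hn.setIntegral_eq _ (hA.inter hpos), setIntegral_congr_set hinter]

lemma prodMk_of_indep [IsProbabilityMeasure P] {M : MeasurableSpace Ω} (hM : M ≤ mΩ) [SFinite ν]
    {mG : MeasurableSpace G} {m : Measure G} [SFinite m] {Y : Ω → G} {q : G → ℝ}
    (h : HasWeightedDensity P f W ν w) (hf : StronglyMeasurable[M] f) (hW : Measurable[M] W)
    (hY : HasWeightedDensity P (fun _ => 1) Y m q) (hindep : Indep M (mG.comap Y) P) :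
    HasWeightedDensity P f (fun ω => (W ω, Y ω)) (ν.prod m) fun s => w s.1 * q s.2 := by
  refine of_prod h.integrable h.measurable_map hY.measurable_map
    ((h.measurable_density.comp measurable_fst).mul (hY.measurable_density.comp measurable_snd))
    (h.integrable_density.mul_prod hY.integrable_density) fun A B hA hB => ?_
  have hYB := hY.setIntegral_eq B hB
  rw [setIntegral_const, smul_eq_mul, mul_one] at hYB
  rw [inter_comm, ← setIntegral_indicator (hM _ (hW hA)),
    setIntegral_eq_measureReal_mul_of_indep hM hY.measurable_map.comap_le hindep
      (hf.indicator (hW hA)) (h.integrable.indicator (hM _ (hW hA))) ⟨B, hB, rfl⟩,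
    integral_indicator (hM _ (hW hA)), h.setIntegral_eq A hA, hYB, setIntegral_prod_mul, mul_comm]

section Group

variable [AddCommGroup G] [MeasurableSpace G] [MeasurableAdd₂ G] [MeasurableNeg G]

/-- The shear `((z, l), y) ↦ ((z, l + y), l)`, whose first component is the observation of `l`
through additive noise `y`. -/
def shearEquiv (E G : Type*) [MeasurableSpace E] [AddCommGroup G] [MeasurableSpace G]
    [MeasurableAdd₂ G] [MeasurableNeg G] : (E × G) × G ≃ᵐ (E × G) × G :=
  MeasurableEquiv.prodAssoc.trans <|
    ((MeasurableEquiv.refl E).prodCongr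
      ((MeasurableEquiv.shearAddRight G).trans MeasurableEquiv.prodComm)).trans
      MeasurableEquiv.prodAssoc.symm

lemma measurePreserving_shearEquiv (κ : Measure E) (μ m : Measure G) [SFinite κ] [SFinite μ]
    [SFinite m] [m.IsAddLeftInvariant] :
    MeasurePreserving (shearEquiv E G) ((κ.prod μ).prod m) ((κ.prod m).prod μ) := by
  have hshear : MeasurePreserving
      ((MeasurableEquiv.shearAddRight G).trans MeasurableEquiv.prodComm) (μ.prod m) (m.prod μ) :=
    Measure.measurePreserving_swap.comp (measurePreserving_prod_add μ m)
  exact (measurePreserving_prodAssoc κ m μ).symm.comp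
    (((MeasurePreserving.id κ).prod hshear).comp (measurePreserving_prodAssoc κ μ m))

lemma add_of_indep [IsProbabilityMeasure P] {M : MeasurableSpace Ω} (hM : M ≤ mΩ)
    {κ : Measure E} {μ m : Measure G} [SFinite κ] [SFinite μ] [SFinite m] [m.IsAddLeftInvariant]
    {Z : Ω → E} {L Y : Ω → G} {w : E × G → ℝ} {q : G → ℝ}
    (h : HasWeightedDensity P f (fun ω => (Z ω, L ω)) (κ.prod μ) w) (hf : StronglyMeasurable[M] f)
    (hZ : Measurable[M] Z) (hL : Measurable[M] L)
    (hY : HasWeightedDensity P (fun _ => 1) Y m q)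
    (hindep : Indep M (MeasurableSpace.comap Y inferInstance) P) :
    HasWeightedDensity P f (fun ω => (Z ω, L ω + Y ω)) (κ.prod m)
      fun s => ∫ l, w (s.1, l) * q (s.2 - l) ∂μ := by
  have hadd := (h.prodMk_of_indep hM hf (hZ.prodMk hL) hY hindep).comp_measurableEquiv
    (shearEquiv E G) (measurePreserving_shearEquiv κ μ m)
  have hdens : (fun s : E × G => ∫ l, w (s.1, l) * q (s.2 - l) ∂μ) =
      fun s => ∫ l, ((fun s => w s.1 * q s.2) ∘ (shearEquiv E G).symm) (s, l) ∂μ := by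
    funext s
    refine integral_congr_ae (ae_of_all _ fun l => ?_)
    change _ = w (s.1, l) * q (-l + s.2)
    rw [neg_add_eq_sub]
  rw [hdens]
  exact fst (U := L) hadd

end Group

lemma of_map_eq_withDensity [IsFiniteMeasure P] (hW : Measurable W) {q : S → ℝ} (hq : Measurable q)
    (hq0 : ∀ s, 0 ≤ q s) (h : P.map W = ν.withDensity fun s => ENNReal.ofReal (q s)) :
    HasWeightedDensity P (fun _ => 1) W ν q := by
  have hlint {A : Set S} (hA : MeasurableSet A) :
      ∫⁻ s in A, ENNReal.ofReal (q s) ∂ν = P (W ⁻¹' A) := by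
    rw [← withDensity_apply _ hA, ← h, Measure.map_apply hW hA]
  refine ⟨integrable_const 1, hW, hq, ⟨hq.aestronglyMeasurable, ?_⟩, fun A hA => ?_⟩
  · rw [hasFiniteIntegral_iff_ofReal (ae_of_all _ hq0), ← setLIntegral_univ, hlint .univ]
    exact measure_lt_top P _
  · rw [setIntegral_const, smul_eq_mul, mul_one,
      integral_eq_lintegral_of_nonneg_ae (ae_of_all _ hq0) hq.aestronglyMeasurable, hlint hA,
      measureReal_def]

section Conditional

variable [IsFiniteMeasure P] {mG : MeasurableSpace G} {μ : Measure G} [SFinite μ]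

lemma of_condExp_indicator_eq {Z : Ω → E} {L : Ω → G}
    (hZ : Measurable Z) (hL : Measurable L) {p : E × G → ℝ} (hp : Measurable p)
    (hp0 : ∀ s, 0 ≤ p s)
    (h : ∀ B, MeasurableSet B →
      P⟦L ⁻¹' B | mE.comap Z⟧ =ᵐ[P] fun ω => ∫ x in B, p (Z ω, x) ∂μ) :
    HasWeightedDensity P (fun _ => 1) (fun ω => (Z ω, L ω)) ((P.map Z).prod μ) p := by
  have hone : ∀ᵐ ω ∂P, ∫ x, p (Z ω, x) ∂μ = 1 := by
    have := h univ .univ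
    simp only [preimage_univ, indicator_univ, Measure.restrict_univ] at this
    rw [condExp_const hZ.comap_le] at this
    filter_upwards [this] with ω hω using hω.symm
  have hone_map : ∀ᵐ z ∂(P.map Z), ∫ x, p (z, x) ∂μ = 1 :=
    (ae_map_iff hZ.aemeasurable (measurableSet_eq_fun
      hp.stronglyMeasurable.integral_prod_right'.measurable measurable_const)).2 hone
  have hpi : Integrable p ((P.map Z).prod μ) := by
    refine (integrable_prod_iff hp.aestronglyMeasurable).2 ⟨?_, ?_⟩
    · filter_upwards [hone_map] with z hz
      exact not_imp_comm.1 integral_undef (hz ▸ one_ne_zero)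
    · simp only [Real.norm_of_nonneg (hp0 _)]
      exact (integrable_const 1).congr (hone_map.mono fun _ hz => hz.symm)
  refine of_prod (integrable_const 1) hZ hL hp hpi fun A B hA hB => ?_
  have hZA : MeasurableSet[mE.comap Z] (Z ⁻¹' A) := ⟨A, hA, rfl⟩
  have hinner : Measurable fun z => ∫ x in B, p (z, x) ∂μ :=
    hp.stronglyMeasurable.integral_prod_right'.measurable
  calc ∫ _ in Z ⁻¹' A ∩ L ⁻¹' B, (1 : ℝ) ∂P
      = ∫ ω in Z ⁻¹' A, (L ⁻¹' B).indicator (fun _ => 1) ω ∂P := by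
        rw [setIntegral_indicator (hL hB)]
    _ = ∫ ω in Z ⁻¹' A, ∫ x in B, p (Z ω, x) ∂μ ∂P := by
        rw [← setIntegral_condExp hZ.comap_le ((integrable_const 1).indicator (hL hB)) hZA]
        exact integral_congr_ae (ae_restrict_of_ae (h B hB))
    _ = ∫ z in A, ∫ x in B, p (z, x) ∂μ ∂(P.map Z) := by
        rw [setIntegral_map hA hinner.aestronglyMeasurable hZ.aemeasurable]
    _ = ∫ s in A ×ˢ B, p s ∂((P.map Z).prod μ) := (setIntegral_prod p hpi.integrableOn).symm

lemma of_ae_condExp_eq {E' : Type*} {mE' : MeasurableSpace E'} {Z' : Ω → E'}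
    {L : Ω → G} {v : E × G → ℝ} {w : E' × G → ℝ}
    (h : HasWeightedDensity P f (fun ω => (Z' ω, L ω)) ((P.map Z').prod μ) w)
    {π : E' → E} (hπ : Measurable π) (hv : Measurable v)
    (hvw : ∀ᵐ l ∂μ,
      (fun ω => v (π (Z' ω), l)) =ᵐ[P] P[fun ω => w (Z' ω, l) | mE.comap (π ∘ Z')]) :
    HasWeightedDensity P f (fun ω => (π (Z' ω), L ω)) ((P.map (π ∘ Z')).prod μ) v := by
  have hZ' : Measurable Z' := measurable_fst.comp h.measurable_map
  have hZ : Measurable (π ∘ Z') := hπ.comp hZ'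
  have hw := h.measurable_density
  have hwi := h.integrable_density
  have hvi : Integrable v ((P.map (π ∘ Z')).prod μ) :=
    integrable_prod_map_of_condExp hZ hZ' hv hw hwi hvw
  have hslice : ∀ᵐ l ∂μ, Integrable (fun ω => w (Z' ω, l)) P := by
    filter_upwards [hwi.prod_left_ae] with l hl
    exact (integrable_map_measure hl.aestronglyMeasurable hZ'.aemeasurable).1 hl
  refine of_prod h.integrable hZ (measurable_snd.comp h.measurable_map) hv hvi fun A B hA hB => ?_
  have hZA : MeasurableSet[mE.comap (π ∘ Z')] (Z' ⁻¹' (π ⁻¹' A)) := ⟨A, hA, rfl⟩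
  calc ∫ ω in (π ∘ Z') ⁻¹' A ∩ L ⁻¹' B, f ω ∂P
      = ∫ s in (π ⁻¹' A) ×ˢ B, w s ∂((P.map Z').prod μ) :=
        h.setIntegral_eq _ ((hπ hA).prod hB)
    _ = ∫ l in B, ∫ ω in Z' ⁻¹' (π ⁻¹' A), w (Z' ω, l) ∂P ∂μ :=
        setIntegral_prod_map_symm hZ' hw hwi (hπ hA)
    _ = ∫ l in B, ∫ ω in Z' ⁻¹' (π ⁻¹' A), v (π (Z' ω), l) ∂P ∂μ := by
        refine integral_congr_ae (ae_restrict_of_ae ?_)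
        filter_upwards [hvw, hslice] with l hl hli
        rw [← setIntegral_condExp hZ.comap_le hli hZA]
        exact integral_congr_ae (ae_restrict_of_ae hl.symm)
    _ = ∫ s in A ×ˢ B, v s ∂((P.map (π ∘ Z')).prod μ) :=
        (setIntegral_prod_map_symm hZ hv hvi hA).symm

end Conditional

end HasWeightedDensity

section Trace

variable {Ω : Type*} {H G mΩ : MeasurableSpace Ω} {P : Measure Ω} {S : Set Ω} {f : Ω → ℝ}

lemma ae_condExp_indicator_ne_zero [IsFiniteMeasure P] (hH : H ≤ mΩ) (hS : MeasurableSet S) :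
    ∀ᵐ ω ∂P, ω ∈ S → (P⟦S | H⟧) ω ≠ 0 := by
  have hzero : MeasurableSet[H] {ω | (P⟦S | H⟧) ω = 0} :=
    stronglyMeasurable_condExp.measurable (measurableSet_singleton 0)
  have hint := setIntegral_condExp hH ((integrable_const (1 : ℝ)).indicator hS (μ := P)) hzero
  have hvanish : ∫ ω in {ω | (P⟦S | H⟧) ω = 0}, (P⟦S | H⟧) ω ∂P = 0 :=
    setIntegral_eq_zero_of_forall_eq_zero fun _ hω => hω
  rw [hvanish, setIntegral_indicator hS, setIntegral_const, smul_eq_mul, mul_one, eq_comm,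
    measureReal_eq_zero_iff] at hint
  filter_upwards [measure_eq_zero_iff_ae_notMem.1 hint] with ω hω hωS h0 using hω ⟨h0, hωS⟩

lemma exists_measurable_eqOn_of_comap_le {g : Ω → ℝ} (hg : Measurable[G] g)
    (htrace : G.comap (Subtype.val : S → Ω) ≤ H.comap Subtype.val) :
    ∃ g' : Ω → ℝ, Measurable[H] g' ∧ EqOn g g' S := by
  have hrestrict : Measurable[H.comap Subtype.val] (g ∘ (Subtype.val : S → Ω)) :=
    (hg.comp (comap_measurable _)).mono htrace le_rfl
  obtain ⟨g', hg', heq⟩ := Measurable.exists_eq_measurable_comp (mY := H) hrestrict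
  exact ⟨g', hg', fun ω hω => congrFun heq ⟨ω, hω⟩⟩

lemma condExp_ae_eq_indicator_div_of_comap_le [IsFiniteMeasure P] (hHG : H ≤ G) (hG : G ≤ mΩ)
    (hS : MeasurableSet[G] S) (htrace : G.comap (Subtype.val : S → Ω) ≤ H.comap Subtype.val)
    (hf : Integrable f P) (hfS : ∀ ω ∉ S, f ω = 0) :
    P[f | G] =ᵐ[P] S.indicator fun ω => (P[f | H]) ω / (P⟦S | H⟧) ω := by
  have hS' := hG S hS
  -- On `S` the `G`-measurable `P[f | G]` agrees with an `H`-measurable `g`, which can be pulled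
  -- out of a conditional expectation given `H`.
  obtain ⟨g, hg, hgS⟩ := exists_measurable_eqOn_of_comap_le
    (stronglyMeasurable_condExp (f := f) (μ := P)).measurable htrace
  have hsupp : P[f | G] =ᵐ[P] S.indicator P[f | G] := by
    have := condExp_indicator hf hS
    rwa [indicator_eq_self.2 (Function.support_subset_iff'.2 hfS)] at this
  have hmul : S.indicator P[f | G] = g * S.indicator fun _ => 1 := by
    ext ω
    by_cases hω : ω ∈ S <;> simp [hω, hgS _]
  have hpull : P[f | H] =ᵐ[P] g * P⟦S | H⟧ := calc
    P[f | H] =ᵐ[P] P[P[f | G] | H] := (condExp_condExp_of_le hHG hG).symm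
    _ =ᵐ[P] P[g * S.indicator fun _ => 1 | H] := condExp_congr_ae (hsupp.trans (.of_eq hmul))
    _ =ᵐ[P] g * P⟦S | H⟧ := condExp_mul_of_stronglyMeasurable_left hg.stronglyMeasurable
        (hmul ▸ integrable_condExp.indicator hS') ((integrable_const 1).indicator hS')
  filter_upwards [hsupp, hpull, ae_condExp_indicator_ne_zero (hHG.trans hG) hS'] with ω h1 h2 h3
  rw [h1]
  by_cases hω : ω ∈ S
  · simp only [indicator_of_mem hω, h2, hgS hω, Pi.mul_apply, mul_div_cancel_right₀ _ (h3 hω)]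
  · simp only [indicator_of_notMem hω]

end Trace

/-- `E[f 1_{L ∈ dl} | m] = w(·, l) P^L(dl)`: for `f = 1`, `w` is Jacod's conditional density of `L`
given the sub-σ-algebra `m`. It is encoded through the weighted law of `ω ↦ (ω, L ω)` on `Ω × G`
relative to `P|_m ⊗ P^L`, where `Ω` carries the σ-algebra `m` and `P|_m` is the image of `P`
under the identity. -/
def HasJacodDensity {Ω G : Type*} [MeasurableSpace G] (m : MeasurableSpace Ω)
    {mΩ : MeasurableSpace Ω} (P : Measure Ω) (f : Ω → ℝ) (L : Ω → G) (w : Ω × G → ℝ) : Prop :=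
  @HasWeightedDensity Ω (Ω × G) mΩ (m.prod inferInstance) P f (fun ω => (ω, L ω))
    (@Measure.prod Ω G m _ (@Measure.map Ω Ω mΩ m id P) (P.map L)) w

namespace HasJacodDensity

variable {Ω G : Type*} [MeasurableSpace G] {m m' M B mΩ : MeasurableSpace Ω} {P : Measure Ω}
  {L : Ω → G} {f : Ω → ℝ} {w : Ω × G → ℝ}

lemma of_condExp_comp_eq [IsFiniteMeasure P] (hm : m ≤ mΩ) (hL : Measurable L)
    {p : Ω × G → ℝ} (hp : Measurable[m.prod inferInstance] p) (hp0 : ∀ s, 0 ≤ p s)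
    (h : ∀ φ : G → ℝ, Measurable φ → (∃ C, ∀ x, |φ x| ≤ C) →
      P[fun ω => φ (L ω) | m] =ᵐ[P] fun ω => ∫ x, φ x * p (ω, x) ∂(P.map L)) :
    HasJacodDensity m P (fun _ => 1) L p := by
  refine HasWeightedDensity.of_condExp_indicator_eq (mE := m) (Z := id) (measurable_id'' hm) hL
    hp hp0 fun A hA => ?_
  have hbound : ∃ C, ∀ x, |A.indicator (fun _ => (1 : ℝ)) x| ≤ C :=
    ⟨1, fun x => by by_cases hx : x ∈ A <;> simp [hx]⟩
  have hmul (ω : Ω) : (fun x => A.indicator (fun _ => 1) x * p (ω, x)) =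
      A.indicator fun x => p (ω, x) := by
    funext x
    simp only [indicator_apply, ite_mul, one_mul, zero_mul]
  have hA' := h _ (measurable_const.indicator hA) hbound
  simp only [hmul, integral_indicator hA] at hA'
  rwa [MeasurableSpace.comap_id]

lemma comp_mul [IsFiniteMeasure P] (h : HasJacodDensity m P (fun _ => 1) L w) {φ : Ω × G → ℝ}
    (hφ : Measurable[m.prod inferInstance] φ) (hφi : Integrable (fun ω => φ (ω, L ω)) P) :
    HasJacodDensity m P (fun ω => φ (ω, L ω)) L fun s => w s * φ s :=
  HasWeightedDensity.comp_mul h hφ hφi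

lemma of_ae_condExp_eq [IsFiniteMeasure P] (hmm' : m ≤ m')
    (h : HasJacodDensity m' P f L w) {v : Ω × G → ℝ} (hv : Measurable[m.prod inferInstance] v)
    (hvw : ∀ᵐ l ∂(P.map L), (fun ω => v (ω, l)) =ᵐ[P] P[fun ω => w (ω, l) | m]) :
    HasJacodDensity m P f L v :=
  HasWeightedDensity.of_ae_condExp_eq (mE := m) (mE' := m') (Z' := id) (π := id) h
    (measurable_id'' hmm') hv
    (by simpa only [id_eq, Function.comp_id, MeasurableSpace.comap_id] using hvw)

lemma indicator [IsFiniteMeasure P] (h : HasJacodDensity m P (fun _ => 1) L w)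
    {ξ : Ω → ℝ} (hξ : Measurable[m] ξ) (hξi : Integrable ξ P) {A : Set (Ω × G)}
    (hA : MeasurableSet[m.prod inferInstance] A) :
    HasJacodDensity m P ({ω | (ω, L ω) ∈ A}.indicator ξ) L
      (A.indicator fun s => w s * ξ s.1) := by
  have hmap : Measurable[mΩ, m.prod inferInstance] fun ω => (ω, L ω) := h.measurable_map
  have hφ : Measurable[m.prod inferInstance] (A.indicator fun s => ξ s.1) :=
    (hξ.comp (@measurable_fst _ _ m _)).indicator hA
  rw [show (A.indicator fun s => w s * ξ s.1) = fun s => w s * A.indicator (fun s => ξ s.1) s from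
    funext fun _ => indicator_mul_right ..]
  exact h.comp_mul hφ (hξi.indicator (hmap hA))

section Noise

variable [AddCommGroup G] [MeasurableAdd₂ G] [MeasurableNeg G] {n p : Ω × G → ℝ}
  {μ : Measure G} [SFinite μ] [μ.IsAddLeftInvariant] {Y : Ω → G} {q : G → ℝ}
  [IsProbabilityMeasure P]

lemma add_of_indep (hmM : m ≤ M) (hM : M ≤ mΩ) (hn : HasJacodDensity m P f L n)
    (hf : StronglyMeasurable[M] f) (hL : Measurable[M] L)
    (hY : HasWeightedDensity P (fun _ => 1) Y μ q)
    (hMY : Indep M (MeasurableSpace.comap Y inferInstance) P) :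
    @HasWeightedDensity Ω (Ω × G) mΩ (m.prod inferInstance) P f (fun ω => (ω, L ω + Y ω))
      (@Measure.prod Ω G m _ (@Measure.map Ω Ω mΩ m id P) μ)
      fun s => ∫ l, n (s.1, l) * q (s.2 - l) ∂(P.map L) :=
  HasWeightedDensity.add_of_indep (mE := m) hM hn hf (measurable_id'' hmM) hL hY hMY

lemma ae_integral_mul_pos (hmM : m ≤ M) (hM : M ≤ mΩ)
    (hp : HasJacodDensity m P (fun _ => 1) L p) (hL : Measurable[M] L)
    (hY : HasWeightedDensity P (fun _ => 1) Y μ q)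
    (hMY : Indep M (MeasurableSpace.comap Y inferInstance) P) :
    ∀ᵐ ω ∂P, 0 < ∫ l, p (ω, l) * q (L ω + Y ω - l) ∂(P.map L) :=
  (hp.add_of_indep hmM hM (@stronglyMeasurable_const _ _ M _ _) hL hY hMY).density_pos

lemma condExp_sup_comap_add_sup (hmM : m ≤ M) (hM : M ≤ mΩ) (hB : B ≤ mΩ)
    (hn : HasJacodDensity m P f L n) (hp : HasJacodDensity m P (fun _ => 1) L p)
    (hf : StronglyMeasurable[M] f) (hL : Measurable[M] L)
    (hY : HasWeightedDensity P (fun _ => 1) Y μ q)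
    (hMY : Indep M (MeasurableSpace.comap Y inferInstance) P)
    (hMYB : Indep (M ⊔ MeasurableSpace.comap Y inferInstance) B P) :
    P[f | m ⊔ MeasurableSpace.comap (fun ω => L ω + Y ω) inferInstance ⊔ B] =ᵐ[P] fun ω =>
      (∫ l, n (ω, l) * q (L ω + Y ω - l) ∂(P.map L)) /
        ∫ l, p (ω, l) * q (L ω + Y ω - l) ∂(P.map L) := by
  have hbayes := (hn.add_of_indep hmM hM hf hL hY hMY).condExp_comap_ae_eq_div
    (hp.add_of_indep hmM hM (@stronglyMeasurable_const _ _ M _ _) hL hY hMY)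
  have hcomap : (m.prod inferInstance).comap (fun ω => (ω, L ω + Y ω)) =
      m ⊔ MeasurableSpace.comap (fun ω => L ω + Y ω) inferInstance :=
    (MeasurableSpace.comap_prodMk (mβ := m) id fun ω => L ω + Y ω).trans
      (by rw [MeasurableSpace.comap_id])
  have hY' : Measurable[M ⊔ MeasurableSpace.comap Y inferInstance] Y :=
    (comap_measurable Y).mono le_sup_right le_rfl
  have hLY : Measurable[M ⊔ MeasurableSpace.comap Y inferInstance] fun ω => L ω + Y ω :=
    (hL.mono le_sup_left le_rfl).add hY'
  rw [hcomap] at hbayes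
  exact (condExp_sup_of_indep (sup_le (hmM.trans le_sup_left) hLY.comap_le)
    (sup_le hM hY.measurable_map.comap_le) hB hMYB (hf.mono le_sup_left) hn.integrable).trans hbayes

end Noise

end HasJacodDensity

section NoisyBarrier

variable {Ω : Type*} {L : Ω → ℝ} {τ : Ω → ℝ≥0} {t θ T : ℝ≥0}

/-- The σ-algebra `σ(ε_s - ε_t : s ≤ t)` of the backward increments of the noise. -/
abbrev incrementSigma (ε : ℝ≥0 → Ω → ℝ) (t : ℝ≥0) : MeasurableSpace Ω :=
  ⨆ s ∈ Iic t, MeasurableSpace.comap (fun ω => ε s ω - ε t ω) inferInstance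

/-- The insider's default-free σ-algebra `F^I_t = F_t ∨ σ(L + ε_s : s ≤ t)`. -/
abbrev insiderSigma {mΩ : MeasurableSpace Ω} (F : Filtration ℝ≥0 mΩ) (L : Ω → ℝ)
    (ε : ℝ≥0 → Ω → ℝ) (t : ℝ≥0) : MeasurableSpace Ω :=
  F t ⊔ ⨆ s ∈ Iic t, MeasurableSpace.comap (fun ω => L ω + ε s ω) inferInstance

/-- `F_∞ ∨ σ(L)`, the σ-algebra of which the noise is independent. -/
abbrev terminalSigma {mΩ : MeasurableSpace Ω} (F : Filtration ℝ≥0 mΩ) (L : Ω → ℝ) :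
    MeasurableSpace Ω :=
  (⨆ s, F s) ⊔ MeasurableSpace.comap L inferInstance

lemma incrementSigma_le (ε : ℝ≥0 → Ω → ℝ) (t : ℝ≥0) :
    incrementSigma ε t ≤ ⨆ s, MeasurableSpace.comap (ε s) inferInstance := by
  have hε (s : ℝ≥0) : Measurable[⨆ s, MeasurableSpace.comap (ε s) inferInstance] (ε s) :=
    measurable_iff_comap_le.2 (le_iSup (fun s => MeasurableSpace.comap (ε s) inferInstance) s)
  exact iSup₂_le fun s _ => ((hε s).sub (hε t)).comap_le

/-- The noise `ε` as seen at the fixed time `t`: it is independent of `M`, its increments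
`ε_s - ε_t`, `s ≤ t`, are independent of `ε_t`, and `ε_t` has Lebesgue density `q`. -/
structure IsBackwardNoise (M : MeasurableSpace Ω) {mΩ : MeasurableSpace Ω} (P : Measure Ω)
    (ε : ℝ≥0 → Ω → ℝ) (t : ℝ≥0) (q : ℝ → ℝ) : Prop where
  measurable : ∀ s, Measurable (ε s)
  indep : Indep (⨆ s, MeasurableSpace.comap (ε s) inferInstance) M P
  indep_increment : Indep (incrementSigma ε t) (MeasurableSpace.comap (ε t) inferInstance) P
  hasDensity : HasWeightedDensity P (fun _ => 1) (ε t) volume q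

namespace IsBackwardNoise

variable {M mΩ : MeasurableSpace Ω} {P : Measure Ω} {ε : ℝ≥0 → Ω → ℝ} {q : ℝ → ℝ}

lemma incrementSigma_le (hε : IsBackwardNoise M P ε t q) : incrementSigma ε t ≤ mΩ :=
  (_root_.incrementSigma_le ε t).trans (iSup_le fun s => (hε.measurable s).comap_le)

lemma indep_comap (hε : IsBackwardNoise M P ε t q) :
    Indep M (MeasurableSpace.comap (ε t) inferInstance) P :=
  (indep_of_indep_of_le_left hε.indep
    (le_iSup (fun s => MeasurableSpace.comap (ε s) inferInstance) t)).symm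

lemma indep_sup_incrementSigma [IsProbabilityMeasure P] (hε : IsBackwardNoise M P ε t q)
    (hM : M ≤ mΩ) :
    Indep (M ⊔ MeasurableSpace.comap (ε t) inferInstance) (incrementSigma ε t) P := by
  rw [sup_comm]
  exact (indep_sup_right_of_indep_sup_left hε.incrementSigma_le (hε.measurable t).comap_le hM
    hε.indep_increment (indep_of_indep_of_le_left hε.indep (sup_le (_root_.incrementSigma_le ε t)
      (le_iSup (fun s => MeasurableSpace.comap (ε s) inferInstance) t)))).symm

end IsBackwardNoise

variable {mΩ : MeasurableSpace Ω} {P : Measure Ω} {F : Filtration ℝ≥0 mΩ} {ε : ℝ≥0 → Ω → ℝ}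

lemma terminalSigma_le (hL : Measurable L) : terminalSigma F L ≤ mΩ :=
  sup_le (iSup_le F.le) hL.comap_le

lemma filtration_le_terminalSigma (F : Filtration ℝ≥0 mΩ) (L : Ω → ℝ) (t : ℝ≥0) :
    F t ≤ terminalSigma F L :=
  le_sup_of_le_left (le_iSup (fun s => F s) t)

lemma measurable_terminalSigma : Measurable[terminalSigma F L] L :=
  (comap_measurable L).mono le_sup_right le_rfl

lemma insiderSigma_le (hL : Measurable L) (hε : ∀ s, Measurable (ε s)) :
    insiderSigma F L ε t ≤ mΩ :=
  sup_le (F.le t) (iSup₂_le fun s _ => (hL.add (hε s)).comap_le)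

lemma insiderFullSigma_le (hL : Measurable L) (hε : ∀ s, Measurable (ε s)) (hτ : Measurable τ) :
    insiderFullSigma F L ε τ t ≤ mΩ := by
  refine sup_le (insiderSigma_le hL hε) (MeasurableSpace.generateFrom_le ?_)
  rintro _ ⟨s, -, rfl⟩
  exact measurableSet_le hτ measurable_const

lemma insiderSigma_eq_sup_incrementSigma : insiderSigma F L ε t =
    F t ⊔ MeasurableSpace.comap (fun ω => L ω + ε t ω) inferInstance ⊔ incrementSigma ε t := by
  have hobs {s : ℝ≥0} (hs : s ≤ t) : Measurable[insiderSigma F L ε t] fun ω => L ω + ε s ω :=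
    measurable_iff_comap_le.2 (le_sup_of_le_right (le_iSup₂ (f := fun s (_ : s ∈ Iic t) =>
      MeasurableSpace.comap (fun ω => L ω + ε s ω) inferInstance) s hs))
  apply le_antisymm
  · refine sup_le (le_sup_of_le_left le_sup_left) (iSup₂_le fun s hs => ?_)
    have hterminal : Measurable[F t ⊔ MeasurableSpace.comap (fun ω => L ω + ε t ω) inferInstance ⊔
        incrementSigma ε t] fun ω => L ω + ε t ω :=
      measurable_iff_comap_le.2 (le_sup_of_le_left le_sup_right)
    have hincrement : Measurable[F t ⊔
        MeasurableSpace.comap (fun ω => L ω + ε t ω) inferInstance ⊔ incrementSigma ε t]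
        fun ω => ε s ω - ε t ω :=
      measurable_iff_comap_le.2 (le_sup_of_le_right (le_iSup₂ (f := fun s (_ : s ∈ Iic t) =>
        MeasurableSpace.comap (fun ω => ε s ω - ε t ω) inferInstance) s hs))
    have hsum : (fun ω => L ω + ε s ω) = (fun ω => L ω + ε t ω) + fun ω => ε s ω - ε t ω :=
      funext fun ω => (add_add_sub_cancel _ _ _).symm
    rw [hsum]
    exact (hterminal.add hincrement).comap_le
  · refine sup_le (sup_le le_sup_left (hobs le_rfl).comap_le) (iSup₂_le fun s hs => ?_)
    have hdiff : (fun ω => ε s ω - ε t ω) = (fun ω => L ω + ε s ω) - fun ω => L ω + ε t ω :=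
      funext fun ω => (add_sub_add_left_eq_sub _ _ _).symm
    rw [hdiff]
    exact ((hobs hs).sub (hobs le_rfl)).comap_le

lemma measurableSet_lt_defaultSigma (τ : Ω → ℝ≥0) (t : ℝ≥0) :
    MeasurableSet[defaultSigma τ t] {ω | t < τ ω} := by
  have hdefault : MeasurableSet[defaultSigma τ t] {ω | τ ω ≤ t} :=
    MeasurableSpace.measurableSet_generateFrom ⟨t, le_rfl, rfl⟩
  simpa only [compl_ofPred, not_le] using hdefault.compl

lemma comap_val_insiderFullSigma_le : (insiderFullSigma F L ε τ t).comap
    (Subtype.val : {ω | t < τ ω} → Ω) ≤ (insiderSigma F L ε t).comap Subtype.val := by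
  change (insiderSigma F L ε t ⊔ defaultSigma τ t).comap _ ≤ _
  rw [MeasurableSpace.comap_sup]
  refine sup_le le_rfl ?_
  rw [defaultSigma, MeasurableSpace.comap_generateFrom]
  refine MeasurableSpace.generateFrom_le ?_
  rintro _ ⟨_, ⟨s, hs, rfl⟩, rfl⟩
  have hempty : (Subtype.val : {ω | t < τ ω} → Ω) ⁻¹' {ω | τ ω ≤ s} = ∅ :=
    eq_empty_of_forall_notMem fun ω hω => (hs.trans_lt ω.2).not_ge hω
  rw [hempty]
  exact @MeasurableSet.empty _ ((insiderSigma F L ε t).comap Subtype.val)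

lemma measurable_runInf {X : ℝ≥0 → Ω → ℝ} (hX : Adapted F X)
    (hX_cont : ∀ ω, Continuous fun s => X s ω) (t : ℝ≥0) : Measurable[F t] (runInf X t) := by
  obtain ⟨S, hS, hS_dense⟩ := TopologicalSpace.exists_countable_dense (Icc 0 t)
  have hcountable : runInf X t = fun ω => ⨅ s : S, X s.1.1 ω := funext fun ω =>
    (hS_dense.ciInf' (f := fun s : Icc 0 t => X s.1 ω)
      ((hX_cont ω).comp continuous_subtype_val)).symm
  have := hS.to_subtype
  rw [hcountable]
  exact Measurable.iInf fun s => (hX s.1.1).mono (F.mono s.1.2.2) le_rfl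

lemma measurable_of_lt_iff_lt_runInf {X : ℝ≥0 → Ω → ℝ}
    (hX : ∀ θ, Measurable[F θ] (runInf X θ)) (hτ : ∀ θ ω, θ < τ ω ↔ L ω < runInf X θ ω) :
    Measurable[terminalSigma F L] τ := by
  refine measurable_of_Ioi fun θ => ?_
  have hset : τ ⁻¹' Ioi θ = {ω | L ω < runInf X θ ω} := ext (hτ θ)
  rw [hset]
  exact measurableSet_lt measurable_terminalSigma
    ((hX θ).mono (filtration_le_terminalSigma F L θ) le_rfl)

lemma hasJacodDensity_indicator_lt [IsFiniteMeasure P] {X : ℝ≥0 → Ω → ℝ}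
    (hX : Measurable[F θ] (runInf X θ)) (hτ : ∀ ω, θ < τ ω ↔ L ω < runInf X θ ω)
    {p : ℝ≥0 → ℝ → Ω → ℝ} (hp : HasJacodDensity (F θ) P (fun _ => 1) L fun s => p θ s.2 s.1)
    {ξ : Ω → ℝ} (hξ : Measurable[F θ] ξ) (hξi : Integrable ξ P) :
    HasJacodDensity (F θ) P ({ω | θ < τ ω}.indicator ξ) L fun s => ξ s.1 * FM p X θ s.2 s.1 := by
  have hA : MeasurableSet[(F θ).prod inferInstance] {s : Ω × ℝ | s.2 < runInf X θ s.1} :=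
    measurableSet_lt (@measurable_snd _ _ (F θ) _) (hX.comp (@measurable_fst _ _ (F θ) _))
  have hset : {ω | θ < τ ω} = {ω | (ω, L ω) ∈ {s : Ω × ℝ | s.2 < runInf X θ s.1}} := ext hτ
  have hdens : (fun s : Ω × ℝ => ξ s.1 * FM p X θ s.2 s.1) =
      {s : Ω × ℝ | s.2 < runInf X θ s.1}.indicator fun s => p θ s.2 s.1 * ξ s.1 := by
    funext s
    simp only [FM, indicator_apply, mem_ofPred_eq, mul_ite, mul_one, mul_zero, mul_comm]
  rw [hset, hdens]
  exact hp.indicator hξ hξi hA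

variable [IsProbabilityMeasure P] {q : ℝ → ℝ} {f : Ω → ℝ} {p n g : Ω × ℝ → ℝ}

lemma condExp_insiderSigma (hL : Measurable L) (hε : IsBackwardNoise (terminalSigma F L) P ε t q)
    (hp : HasJacodDensity (F t) P (fun _ => 1) L p) (hn : HasJacodDensity (F t) P f L n)
    (hf : StronglyMeasurable[terminalSigma F L] f) :
    P[f | insiderSigma F L ε t] =ᵐ[P] fun ω =>
      (∫ l, n (ω, l) * q (L ω + ε t ω - l) ∂(P.map L)) /
        ∫ l, p (ω, l) * q (L ω + ε t ω - l) ∂(P.map L) := by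
  rw [insiderSigma_eq_sup_incrementSigma]
  exact hn.condExp_sup_comap_add_sup (filtration_le_terminalSigma F L t) (terminalSigma_le hL)
    hε.incrementSigma_le hp hf measurable_terminalSigma hε.hasDensity hε.indep_comap
    (hε.indep_sup_incrementSigma (terminalSigma_le hL))

lemma ae_integral_mul_ne_zero_of_lt (hL : Measurable L)
    (hε : IsBackwardNoise (terminalSigma F L) P ε t q) (hτ : Measurable[terminalSigma F L] τ)
    (hp : HasJacodDensity (F t) P (fun _ => 1) L p)
    (hg : HasJacodDensity (F t) P ({ω | t < τ ω}.indicator fun _ => 1) L g) :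
    ∀ᵐ ω ∂P, t < τ ω → ∫ l, g (ω, l) * q (L ω + ε t ω - l) ∂(P.map L) ≠ 0 := by
  have hS : MeasurableSet[terminalSigma F L] {ω | t < τ ω} := hτ measurableSet_Ioi
  filter_upwards [ae_condExp_indicator_ne_zero (P := P)
      (insiderSigma_le (F := F) (t := t) hL hε.measurable) (terminalSigma_le hL _ hS),
    condExp_insiderSigma hL hε hp hg (stronglyMeasurable_const.indicator hS)]
    with ω hsurvival heq hω hzero
  exact hsurvival hω (by rw [heq, hzero, zero_div])

lemma condExp_insiderFullSigma (hL : Measurable L)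
    (hε : IsBackwardNoise (terminalSigma F L) P ε t q) (hτ : Measurable[terminalSigma F L] τ)
    (hp : HasJacodDensity (F t) P (fun _ => 1) L p)
    (hg : HasJacodDensity (F t) P ({ω | t < τ ω}.indicator fun _ => 1) L g)
    (hn : HasJacodDensity (F t) P f L n) (hf : StronglyMeasurable[terminalSigma F L] f)
    (hfτ : ∀ ω, τ ω ≤ t → f ω = 0) :
    P[f | insiderFullSigma F L ε τ t] =ᵐ[P] {ω | t < τ ω}.indicator fun ω =>
      (∫ l, n (ω, l) * q (L ω + ε t ω - l) ∂(P.map L)) /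
        ∫ l, g (ω, l) * q (L ω + ε t ω - l) ∂(P.map L) := by
  have hM := terminalSigma_le (F := F) hL
  have hpos := hp.ae_integral_mul_pos (filtration_le_terminalSigma F L t) hM
    measurable_terminalSigma hε.hasDensity hε.indep_comap
  filter_upwards [condExp_ae_eq_indicator_div_of_comap_le (H := insiderSigma F L ε t)
      (G := insiderFullSigma F L ε τ t) le_sup_left
      (insiderFullSigma_le hL hε.measurable (hτ.mono hM le_rfl))
      (le_sup_right (a := insiderSigma F L ε t) _ (measurableSet_lt_defaultSigma τ t))
      comap_val_insiderFullSigma_le hn.integrable fun ω hω => hfτ ω (not_lt.1 hω),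
    condExp_insiderSigma hL hε hp hn hf,
    condExp_insiderSigma hL hε hp hg (stronglyMeasurable_const.indicator (hτ measurableSet_Ioi)),
    hpos] with ω htrace hnumerator hdenominator hω
  rw [htrace]
  simp only [indicator_apply, hnumerator, hdenominator, div_div_div_cancel_right₀ hω.ne']

end NoisyBarrier

theorem insider_terminal_payoff_term_general
    {Ω : Type*} [m0 : MeasurableSpace Ω] {P : Measure Ω} [IsProbabilityMeasure P]
    (F : Filtration ℝ≥0 m0)
    (X : ℝ≥0 → Ω → ℝ) (hX_adapted : Adapted F X)
    (hX_cont : ∀ ω, Continuous fun s => X s ω)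
    (L : Ω → ℝ) (hL : Measurable L) (τ : Ω → ℝ≥0)
    (hτ : ∀ (θ : ℝ≥0) (ω : Ω), θ < τ ω ↔ L ω < runInf X θ ω)
    (p : ℝ≥0 → ℝ → Ω → ℝ) (hp_nonneg : ∀ t x ω, 0 ≤ p t x ω)
    (hp_meas : ∀ t, Measurable[(F t).prod inferInstance] fun q : Ω × ℝ => p t q.2 q.1)
    (hp_density : ∀ (t : ℝ≥0) (f : ℝ → ℝ), Measurable f → (∃ C, ∀ x, |f x| ≤ C) →
      (P[fun ω => f (L ω) | F t]) =ᵐ[P] fun ω => ∫ x, f x * p t x ω ∂(P.map L))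
    (t T : ℝ≥0) (htT : t ≤ T) (ε : ℝ≥0 → Ω → ℝ) (q : ℝ≥0 → ℝ → ℝ)
    (hε : IsBackwardNoise (terminalSigma F L) P ε t (q t))
    (ξ : Ω → ℝ) (hξ_meas : Measurable[F T] ξ) (hξ_int : Integrable ξ P)
    (v : Ω × ℝ → ℝ) (hv_meas : Measurable[(F t).prod inferInstance] v)
    (hv : ∀ᵐ l ∂(P.map L),
      (fun ω => v (ω, l)) =ᵐ[P] P[fun ω => ξ ω * FM p X T l ω | F t]) :
    P {ω | t < τ ω ∧ NI P p X L q t (L ω + ε t ω) ω = 0} = 0 ∧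
    (P[fun ω => ξ ω * (if T < τ ω then 1 else 0) | insiderFullSigma F L ε τ t]) =ᵐ[P]
      fun ω => if t < τ ω then
        (∫ l, v (ω, l) * q t (L ω + ε t ω - l) ∂(P.map L))
          / NI P p X L q t (L ω + ε t ω) ω
      else 0 := by
  have hrun (θ : ℝ≥0) : Measurable[F θ] (runInf X θ) := measurable_runInf hX_adapted hX_cont θ
  have hτ_meas : Measurable[terminalSigma F L] τ := measurable_of_lt_iff_lt_runInf hrun hτ
  have hjacod (θ : ℝ≥0) := HasJacodDensity.of_condExp_comp_eq (F.le θ) hL (hp_meas θ)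
    (fun s => hp_nonneg θ s.2 s.1) (hp_density θ)
  have hsurvival : HasJacodDensity (F t) P ({ω | t < τ ω}.indicator fun _ => 1) L
      fun s => FM p X t s.2 s.1 := by
    simpa only [one_mul] using hasJacodDensity_indicator_lt (hrun t) (hτ t) (hjacod t)
      measurable_const (integrable_const 1)
  have hpayoff : HasJacodDensity (F t) P ({ω | T < τ ω}.indicator ξ) L v :=
    (hasJacodDensity_indicator_lt (hrun T) (hτ T) (hjacod T) hξ_meas hξ_int).of_ae_condExp_eq
      (F.mono htT) hv_meas hv
  have hpayoff_eq : (fun ω => ξ ω * (if T < τ ω then 1 else 0)) = {ω | T < τ ω}.indicator ξ := by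
    funext ω
    simp only [indicator_apply, mem_ofPred_eq, mul_ite, mul_one, mul_zero]
  refine ⟨measure_eq_zero_iff_ae_notMem.2 ?_, ?_⟩
  · filter_upwards [ae_integral_mul_ne_zero_of_lt hL hε hτ_meas (hjacod t) hsurvival]
      with ω hω h using hω h.1 h.2
  · rw [hpayoff_eq]
    exact condExp_insiderFullSigma hL hε hτ_meas (hjacod t) hsurvival hpayoff
      ((hξ_meas.mono (filtration_le_terminalSigma F L T) le_rfl).indicator
        (hτ_meas measurableSet_Ioi)).stronglyMeasurable
      fun ω hω => indicator_of_notMem (s := {ω | T < τ ω}) (hω.trans htT).not_gt ξ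

/-- **Terminal-payoff term in the proof of Theorem 5.1.** Under Jacod's density hypothesis
and the noisy-barrier setup, if `v(·,l)` is, for `P^L`-a.e. `l`, a version of
`E_P[ξ F^M_T(l) | F_t]`, then, `P`-a.s., `E_P[ξ 1_{τ > T} | G^I_t} = (1_{τ > t}/N_t(L_t))
∫ v(·,l) q_t(L_t − l) P^L(dl)` (the right-hand side being `0` on `{τ ≤ t}`, and
`P(τ > t, N_t(L_t) = 0) = 0`). -/
theorem insider_terminal_payoff_term
    {Ω : Type*} [m0 : MeasurableSpace Ω] {P : Measure Ω} [IsProbabilityMeasure P]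
    (F : Filtration ℝ≥0 m0)
    (X : ℝ≥0 → Ω → ℝ) (hX_adapted : Adapted F X)
    (hX_cont : ∀ ω, Continuous fun s => X s ω)
    (L : Ω → ℝ) (hL : Measurable L)
    (hX0 : ∀ᵐ ω ∂P, L ω < X 0 ω)
    (τ : Ω → ℝ≥0)
    (hτ : ∀ (θ : ℝ≥0) (ω : Ω), θ < τ ω ↔ L ω < runInf X θ ω)
    -- Jacod's density hypothesis
    (p : ℝ≥0 → ℝ → Ω → ℝ)
    (hp_nonneg : ∀ t x ω, 0 ≤ p t x ω)
    (hp_meas : ∀ t, Measurable[(F t).prod inferInstance] fun q : Ω × ℝ => p t q.2 q.1)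
    (hp_pos : ∀ t, ∀ᵐ ω ∂P, 0 < p t (L ω) ω)
    (hp_density : ∀ (t : ℝ≥0) (f : ℝ → ℝ), Measurable f → (∃ C, ∀ x, |f x| ≤ C) →
      (P[fun ω => f (L ω)|F t]) =ᵐ[P] fun ω => ∫ x, f x * p t x ω ∂(P.map L))
    -- the noise process: continuous, independent of `F_∞ ∨ σ(L)`, with backwardly
    -- independent increments, whose marginal laws admit Lebesgue densities `q_t`
    (ε : ℝ≥0 → Ω → ℝ) (hε_meas : ∀ s, Measurable (ε s))
    (hε_cont : ∀ ω, Continuous fun s => ε s ω)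
    (hε_indep : Indep (⨆ s, MeasurableSpace.comap (ε s) inferInstance)
      ((⨆ s, F s) ⊔ MeasurableSpace.comap L inferInstance) P)
    (hε_back : ∀ t θ : ℝ≥0, t ≤ θ →
      Indep (⨆ s ∈ Set.Iic t, MeasurableSpace.comap (fun ω => ε s ω - ε t ω) inferInstance)
        (MeasurableSpace.comap (ε θ) inferInstance) P)
    (q : ℝ≥0 → ℝ → ℝ) (hq_meas : ∀ s, Measurable (q s)) (hq_nonneg : ∀ s x, 0 ≤ q s x)
    (hq_density : ∀ s, P.map (ε s) = volume.withDensity fun x => ENNReal.ofReal (q s x))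
    -- times and terminal payoff
    (t T : ℝ≥0) (htT : t ≤ T)
    (ξ : Ω → ℝ) (hξ_meas : Measurable[F T] ξ) (hξ_bdd : ∃ C, ∀ ω, |ξ ω| ≤ C)
    -- the kernel `v`
    (v : Ω × ℝ → ℝ)
    (hv_meas : Measurable[(F t).prod inferInstance] v)
    (hv : ∀ᵐ l ∂(P.map L),
      (fun ω => v (ω, l)) =ᵐ[P] P[fun ω => ξ ω * FM p X T l ω|F t]) :
    P {ω | t < τ ω ∧ NI P p X L q t (L ω + ε t ω) ω = 0} = 0 ∧
    (P[fun ω => ξ ω * (if T < τ ω then 1 else 0)|insiderFullSigma F L ε τ t]) =ᵐ[P]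
      fun ω => if t < τ ω then
        (∫ l, v (ω, l) * q t (L ω + ε t ω - l) ∂(P.map L))
          / NI P p X L q t (L ω + ε t ω) ω
      else 0 := by
  obtain ⟨C, hC⟩ := hξ_bdd
  exact insider_terminal_payoff_term_general F X hX_adapted hX_cont L hL τ hτ p hp_nonneg hp_meas
    hp_density t T htT ε q ⟨hε_meas, hε_indep, hε_back t t le_rfl, .of_map_eq_withDensity
      (hε_meas t) (hq_meas t) (hq_nonneg t) (hq_density t)⟩ ξ hξ_meas
    (.of_bound (hξ_meas.mono (F.le T) le_rfl).aestronglyMeasurable C (ae_of_all _ hC)) v hv_meas hv
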